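/- arXiv:2203.06095 — 3 statements merged into one kernel-verified Lean document; each statement's English description precedes it below -/
import Mathlib

section
/- Let n ≥ 1, let z, w : Fin n → {0,1} be two n-bit strings, and let A_{z,w} be the 2^n × 2^n complex matrix of |z⟩⟨w| + |w⟩⟨z|, i.e. its (a,b) entry is [a = z ∧ b = w] + [a = w ∧ b = z]. Then any two Pauli strings that appear with nonvanishing coefficient in the Pauli-string decomposition of A_{z,w} commute: for all s, s' : Fin n → {0,1,2,3}, if trace(P_s · A_{z,w}) ≠ 0 and trace(P_{s'} · A_{z,w}) ≠ 0, then P_s · P_{s'} = P_{s'} · P_s. -/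
open Matrix

/-- The four single-qubit Pauli matrices `I, X, Y, Z`. -/
noncomputable def pauli : Fin 4 → Matrix (Fin 2) (Fin 2) ℂ :=
  ![!![1, 0; 0, 1], !![0, 1; 1, 0], !![0, -Complex.I; Complex.I, 0], !![1, 0; 0, -1]]

/-- The Pauli string `σ_{s 0} ⊗ ⋯ ⊗ σ_{s (n-1)}` as a `2^n × 2^n` matrix indexed by
bitstrings. -/
noncomputable def pauliString (n : ℕ) (s : Fin n → Fin 4) :
    Matrix (Fin n → Fin 2) (Fin n → Fin 2) ℂ :=
  Matrix.of fun a b => ∏ i, pauli (s i) (a i) (b i)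

/-- The matrix `|z⟩⟨w| + |w⟩⟨z|` for two computational basis states `z, w`. -/
def ketbraSym {n : ℕ} (z w : Fin n → Fin 2) :
    Matrix (Fin n → Fin 2) (Fin n → Fin 2) ℂ :=
  Matrix.of fun a b =>
    (if a = z ∧ b = w then 1 else 0) + (if a = w ∧ b = z then 1 else 0)


/-- Transposition sign of a Pauli matrix. -/
noncomputable def tsgn (k : Fin 4) : ℂ := if k = 2 then -1 else 1

lemma pauli_swap (k : Fin 4) (a b : Fin 2) : pauli k b a = tsgn k * pauli k a b := by
  fin_cases k <;> fin_cases a <;> fin_cases b <;> simp [pauli, tsgn]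

lemma pauli_comm (k k' : Fin 4) (a b : Fin 2) (h : pauli k a b ≠ 0) (h' : pauli k' a b ≠ 0)
    (c d : Fin 2) :
    (pauli k * pauli k') c d = (tsgn k * tsgn k') * (pauli k' * pauli k) c d := by
  fin_cases k <;> fin_cases k' <;> fin_cases a <;> fin_cases b <;>
    first
    | (exfalso; revert h; simp [pauli]; done)
    | (exfalso; revert h'; simp [pauli]; done)
    | (fin_cases c <;> fin_cases d <;> simp [pauli, tsgn, Matrix.mul_apply, Fin.sum_univ_two])

lemma pauliString_mul_apply (n : ℕ) (s s' : Fin n → Fin 4) (a b : Fin n → Fin 2) :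
    (pauliString n s * pauliString n s') a b = ∏ i, (pauli (s i) * pauli (s' i)) (a i) (b i) := by
  simp only [Matrix.mul_apply, pauliString, Matrix.of_apply, ← Finset.prod_mul_distrib]
  rw [Finset.prod_univ_sum, Fintype.piFinset_univ]

lemma trace_ketbra (n : ℕ) (s : Fin n → Fin 4) (z w : Fin n → Fin 2) :
    (pauliString n s * ketbraSym z w).trace = pauliString n s w z + pauliString n s z w := by
  simp [Matrix.trace, Matrix.mul_apply, ketbraSym, mul_add, Finset.sum_add_distrib, ite_and]

lemma tsgn_prod (n : ℕ) (s : Fin n → Fin 4) : ∏ i, tsgn (s i) = 1 ∨ ∏ i, tsgn (s i) = -1 := by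
  refine Finset.prod_induction (fun i => tsgn (s i)) (fun x => x = 1 ∨ x = -1) ?_ (Or.inl rfl) ?_
  · rintro a b (rfl | rfl) (rfl | rfl) <;> simp
  · intro i _
    unfold tsgn
    split_ifs <;> simp

lemma pauli_key (n : ℕ) (s : Fin n → Fin 4) (z w : Fin n → Fin 2)
    (hs : (pauliString n s * ketbraSym z w).trace ≠ 0) :
    ∏ i, tsgn (s i) = 1 ∧ ∀ i, pauli (s i) (z i) (w i) ≠ 0 := by
  have hsw : pauliString n s w z = (∏ i, tsgn (s i)) * pauliString n s z w := by
    simp only [pauliString, Matrix.of_apply, ← Finset.prod_mul_distrib]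
    exact Finset.prod_congr rfl fun i _ => pauli_swap _ _ _
  rw [trace_ketbra, hsw] at hs
  constructor
  · rcases tsgn_prod n s with h | h
    · exact h
    · rw [h] at hs
      simp at hs
  · intro i hi
    have h0 : pauliString n s z w = 0 := by
      simp only [pauliString, Matrix.of_apply]
      exact Finset.prod_eq_zero (Finset.mem_univ i) hi
    rw [h0] at hs
    simp at hs

/-- Any two Pauli strings appearing with nonvanishing coefficient in the
Pauli decomposition of `|z⟩⟨w| + |w⟩⟨z|` commute. -/
theorem pauli_strings_of_ketbraSym_commute (n : ℕ) (hn : 1 ≤ n)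
    (z w : Fin n → Fin 2) (s s' : Fin n → Fin 4)
    (hs : (pauliString n s * ketbraSym z w).trace ≠ 0)
    (hs' : (pauliString n s' * ketbraSym z w).trace ≠ 0) :
    pauliString n s * pauliString n s' = pauliString n s' * pauliString n s := by
  obtain ⟨h1, h2⟩ := pauli_key n s z w hs
  obtain ⟨h1', h2'⟩ := pauli_key n s' z w hs'
  ext a b
  rw [pauliString_mul_apply, pauliString_mul_apply,
    Finset.prod_congr rfl fun i _ => pauli_comm _ _ _ _ (h2 i) (h2' i) (a i) (b i),
    Finset.prod_mul_distrib, Finset.prod_mul_distrib, h1, h1', one_mul, one_mul]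
end

section
/- Let n ≥ 1 and 1 ≤ m ≤ n. For a subset S ⊆ Fin n, let s_S : Fin n → {0,1,2,3} assign 1 (i.e. X) at positions in S and 0 (i.e. I) elsewhere. Then the sum over all subsets S of cardinality m of the Pauli strings P_{s_S} equals the Hamming-distance-m matrix: Σ_{S : |S| = m} P_{s_S} is the 2^n × 2^n matrix whose (a,b) entry is 1 if the Hamming distance between the bitstrings a and b equals m, and 0 otherwise. In other words, the mixer Hamiltonian generated by the transition matrix T_{Ham(m)} is the sum of all (n choose m) Pauli strings consisting of exactly m X factors. -/
open Matrix

theorem pauliString_X_apply (n : ℕ) (S : Finset (Fin n)) (a b : Fin n → Fin 2) :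
    pauliString n (fun i => if i ∈ S then 1 else 0) a b =
      if S = Finset.univ.filter (fun i => a i ≠ b i) then (1 : ℂ) else 0 := by
  have key : ∀ i, pauli (if i ∈ S then 1 else 0) (a i) (b i) =
      if (i ∈ S ↔ a i ≠ b i) then (1 : ℂ) else 0 := by
    intro i
    generalize a i = x
    generalize b i = y
    by_cases h : i ∈ S <;> fin_cases x <;> fin_cases y <;> simp [h, pauli]
  simp only [pauliString, Matrix.of_apply, key]
  rw [Finset.prod_ite_zero]
  simp [Finset.ext_iff]

/-- For `1 ≤ m ≤ n`, the sum over all subsets `S` of cardinality `m` of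
the Pauli strings with `X` on `S` and `I` elsewhere equals the Hamming distance `m`
matrix `T_{Ham(m)}`. -/
theorem sum_X_strings_eq_hamming (n m : ℕ) (hn : 1 ≤ n) (hm1 : 1 ≤ m) (hmn : m ≤ n) :
    (∑ S ∈ Finset.univ.filter (fun S : Finset (Fin n) => S.card = m),
        pauliString n (fun i => if i ∈ S then 1 else 0)) =
      Matrix.of fun a b : Fin n → Fin 2 =>
        if hammingDist a b = m then (1 : ℂ) else 0 := by
  ext a b
  rw [Matrix.sum_apply]
  simp only [pauliString_X_apply, Matrix.of_apply]
  rw [Finset.sum_ite_eq']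
  simp [hammingDist]
end

section
/- Let n ≥ 1 and, for d ∈ ℕ, let A_d be the real 2^n × 2^n matrix indexed by bitstrings a, b : Fin n → {0,1} whose (a,b) entry is 1 if the Hamming distance between a and b equals d, and 0 otherwise. Then for every k with 1 ≤ k ≤ n, A_k · A_1 = A_1 · A_k = (n − k + 1)·A_{k−1} + (k + 1)·A_{k+1} (where A_{n+1} is the zero matrix). -/
open Matrix

/-- `hamMat n d` is the `2^n × 2^n` real matrix whose `(a,b)` entry is `1` if the
Hamming distance between the bitstrings `a` and `b` equals `d`, and `0` otherwise
(the matrix `T_{Ham(d)} = A_d`). -/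
def hamMat (n d : ℕ) : Matrix (Fin n → Fin 2) (Fin n → Fin 2) ℝ :=
  Matrix.of fun a b => if hammingDist a b = d then 1 else 0

/-- Flip the `i`-th bit of `b`. -/
def flipBit {n : ℕ} (b : Fin n → Fin 2) (i : Fin n) : Fin n → Fin 2 :=
  Function.update b i (b i + 1)

lemma fin2_add_one_ne (x : Fin 2) : x + 1 ≠ x := by revert x; decide

lemma fin2_eq_add_one (x y : Fin 2) (h : x ≠ y) : x = y + 1 := by
  revert x y; decide

lemma hammingDist_flipBit_ne {n : ℕ} (a b : Fin n → Fin 2) (i : Fin n) (h : a i ≠ b i) :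
    hammingDist a (flipBit b i) + 1 = hammingDist a b := by
  have e : (Finset.univ.filter fun j => a j ≠ flipBit b i j) =
      (Finset.univ.filter fun j => a j ≠ b j).erase i := by
    ext j
    simp only [Finset.mem_filter, Finset.mem_univ, true_and, Finset.mem_erase,
      Finset.mem_insert]
    by_cases hj : j = i
    · subst hj
      simp [flipBit, fin2_eq_add_one _ _ h]
    · simp [flipBit, hj]
  unfold hammingDist
  rw [e, Finset.card_erase_add_one]
  simpa using h

lemma hammingDist_flipBit_eq {n : ℕ} (a b : Fin n → Fin 2) (i : Fin n) (h : a i = b i) :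
    hammingDist a (flipBit b i) = hammingDist a b + 1 := by
  have e : (Finset.univ.filter fun j => a j ≠ flipBit b i j) =
      insert i (Finset.univ.filter fun j => a j ≠ b j) := by
    ext j
    simp only [Finset.mem_filter, Finset.mem_univ, true_and, Finset.mem_erase,
      Finset.mem_insert]
    by_cases hj : j = i
    · subst hj
      simp [flipBit, h, (fin2_add_one_ne _).symm]
    · simp [flipBit, hj]
  unfold hammingDist
  rw [e, Finset.card_insert_of_notMem]
  simpa using h

lemma flipBit_injective {n : ℕ} (b : Fin n → Fin 2) : Function.Injective (flipBit b) := by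
  intro i j h
  by_contra hij
  have := congrFun h i
  simp [flipBit, hij] at this

lemma filter_dist_one {n : ℕ} (b : Fin n → Fin 2) :
    (Finset.univ.filter fun c => hammingDist c b = 1) = Finset.univ.image (flipBit b) := by
  ext c
  simp only [Finset.mem_filter, Finset.mem_univ, true_and, Finset.mem_image]
  constructor
  · intro h
    unfold hammingDist at h
    obtain ⟨i, hi⟩ := Finset.card_eq_one.mp h
    have key : ∀ j, c j ≠ b j ↔ j = i := by
      intro j
      have := Finset.ext_iff.mp hi j
      simpa using this
    refine ⟨i, ?_⟩
    funext j
    by_cases hj : j = i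
    · subst hj
      simpa [flipBit] using (fin2_eq_add_one _ _ ((key j).2 rfl)).symm
    · have := (key j).not.2 hj
      simp only [not_not] at this
      simp [flipBit, hj, this]
  · rintro ⟨i, rfl⟩
    rw [hammingDist_comm, hammingDist_flipBit_eq b b i rfl, hammingDist_self]

lemma hamMat_mul_one (n k : ℕ) (hk : 1 ≤ k) :
    hamMat n k * hamMat n 1 =
      ((n : ℝ) - (k : ℝ) + 1) • hamMat n (k - 1) + ((k : ℝ) + 1) • hamMat n (k + 1) := by
  ext a b
  have h1 : (hamMat n k * hamMat n 1) a b =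
      ∑ i : Fin n, if hammingDist a (flipBit b i) = k then (1 : ℝ) else 0 := by
    simp only [Matrix.mul_apply, hamMat, Matrix.of_apply, mul_ite, mul_one, mul_zero]
    rw [← Finset.sum_filter, filter_dist_one,
      Finset.sum_image (flipBit_injective b).injOn]
  have h2 : ∀ i : Fin n, (if hammingDist a (flipBit b i) = k then (1 : ℝ) else 0) =
      if a i ≠ b i then (if hammingDist a b = k + 1 then (1 : ℝ) else 0)
      else (if hammingDist a b = k - 1 then (1 : ℝ) else 0) := by
    intro i
    by_cases h : a i = b i
    · have := hammingDist_flipBit_eq a b i h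
      simp only [h, ne_eq, not_true_eq_false, if_false]
      congr 1
      apply propext
      omega
    · have := hammingDist_flipBit_ne a b i h
      simp only [h, ne_eq, not_false_eq_true, if_true]
      congr 1
      apply propext
      omega
  have hc : (Finset.univ.filter fun i => a i ≠ b i).card = hammingDist a b := rfl
  have hc2 : ((Finset.univ.filter fun i => ¬ (a i ≠ b i)).card : ℝ) = n - hammingDist a b := by
    have := Finset.card_filter_add_card_filter_not (s := (Finset.univ : Finset (Fin n)))
      (fun i => a i ≠ b i)
    rw [hc, Finset.card_univ, Fintype.card_fin] at this
    rw [eq_sub_iff_add_eq']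
    exact_mod_cast this
  rw [h1, Finset.sum_congr rfl fun i _ => h2 i, Finset.sum_ite, Finset.sum_const,
    Finset.sum_const, nsmul_eq_mul, nsmul_eq_mul, hc, hc2]
  simp only [hamMat, Matrix.add_apply, Matrix.smul_apply, Matrix.of_apply, smul_eq_mul]
  obtain ⟨m, rfl⟩ : ∃ m, k = m + 1 := ⟨k - 1, by omega⟩
  rw [Nat.add_sub_cancel, add_comm]
  congr 1
  · split_ifs with h
    · rw [h]; push_cast; ring
    · simp
  · split_ifs with h
    · rw [h]; push_cast; ring
    · simp

lemma hamMat_transpose (n d : ℕ) : (hamMat n d)ᵀ = hamMat n d := by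
  ext a b
  simp [hamMat, hammingDist_comm]

/-- For `1 ≤ k ≤ n`,
`A_k · A_1 = A_1 · A_k = (n - k + 1) • A_{k-1} + (k + 1) • A_{k+1}`. -/
theorem hamming_matrix_recursion (n : ℕ) (hn : 1 ≤ n) (k : ℕ) (hk1 : 1 ≤ k)
    (hkn : k ≤ n) :
    hamMat n k * hamMat n 1 = hamMat n 1 * hamMat n k ∧
    hamMat n k * hamMat n 1 =
      ((n : ℝ) - (k : ℝ) + 1) • hamMat n (k - 1) + ((k : ℝ) + 1) • hamMat n (k + 1) := by
  have h := hamMat_mul_one n k hk1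
  refine ⟨?_, h⟩
  have ht := congrArg Matrix.transpose h
  simp only [Matrix.transpose_mul, Matrix.transpose_add, Matrix.transpose_smul,
    hamMat_transpose] at ht
  rw [h, ht]
end
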